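/- There exist universal constants C, c > 0 such that the following holds. Let k, h, t, d, s be positive integers with 1 ≤ s ≤ k and k·h·t ≥ 3·s, let α ∈ (0,1), and let V₁, …, V_N be linear subspaces of ℝ^n, each of dimension at most s, with N ≤ (k·h·t/s)^{s·d}. Let A ∈ ℝ^{m×n} be a random matrix with i.i.d. N(0, 1/m) entries. If m ≥ C·(1/α²)·s·d·log(k·h·t/s), then with probability at least 1 − exp(−c·α²·m), A satisfies S-REC(⋃_{i=1}^N V_i, 1 − α, 0), i.e., ‖A(x₁ − x₂)‖₂ ≥ (1 − α)·‖x₁ − x₂‖₂ for all x₁, x₂ in ⋃_i V_i. -/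

import Mathlib

open MeasureTheory ProbabilityTheory
/-- The law of an `m × n` random matrix with i.i.d. `N(0, 1/m)` entries. -/
noncomputable def gaussMatrix (m n : ℕ) : Measure (Fin m → Fin n → ℝ) :=
  Measure.pi fun _ => Measure.pi fun _ => gaussianReal 0 ((m : NNReal))⁻¹

lemma aux_exp (u : ℝ) (h2 : u ≤ 1/2) : 1 ≤ (1-u) * Real.exp (u+u^2) := by
  rcases le_total 0 u with h | h
  · have := Real.quadratic_le_exp_of_nonneg (x := u+u^2) (by positivity)
    have h3 : (1-u) * (1 + (u+u^2) + (u+u^2)^2/2) ≤ (1-u) * Real.exp (u+u^2) :=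
      mul_le_mul_of_nonneg_left this (by linarith)
    have h4 : (0:ℝ) ≤ u^2 * ((1+u)^2*(1-u)/2 - u) := by
      apply mul_nonneg (by positivity)
      nlinarith [mul_nonneg h (sub_nonneg.2 h2), mul_nonneg h (mul_nonneg h (sub_nonneg.2 h2))]
    nlinarith
  · have := Real.add_one_le_exp (u+u^2)
    have h3 : (1-u) * ((u+u^2) + 1) ≤ (1-u) * Real.exp (u+u^2) :=
      mul_le_mul_of_nonneg_left this (by linarith)
    nlinarith [mul_nonneg (neg_nonneg.2 h) (sq_nonneg u)]

lemma gauss_sq (v : NNReal) (hv : v ≠ 0) (l : ℝ) (h1 : |l * v| ≤ 1/4) :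
    Integrable (fun x => Real.exp (l * x^2)) (gaussianReal 0 v) ∧
    ∫ x, Real.exp (l * x^2) ∂(gaussianReal 0 v) ≤ Real.exp (l * v + 2 * (l*v)^2) := by
  have hv0 : (0:ℝ) < v := by positivity
  obtain ⟨ha, hb⟩ := abs_le.1 h1
  have hb0 : 0 < (1 - 2*(l*v)) / (2*v) := by apply div_pos <;> linarith
  have key : ∀ x, gaussianPDFReal 0 v x • Real.exp (l * x^2) =
      (√(2 * Real.pi * v))⁻¹ * Real.exp (-((1 - 2*(l*v)) / (2*v)) * x^2) := by
    intro x
    rw [gaussianPDFReal_def, smul_eq_mul, mul_assoc, ← Real.exp_add]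
    congr 2
    field_simp
    ring
  constructor
  · rw [gaussianReal_of_var_ne_zero _ hv, gaussianPDF_def,
      integrable_withDensity_iff_integrable_smul₀' (by fun_prop) (by simp)]
    have : (fun x => (ENNReal.ofReal (gaussianPDFReal 0 v x)).toReal • Real.exp (l * x^2)) =
      fun x => (√(2 * Real.pi * v))⁻¹ * Real.exp (-((1 - 2*(l*v)) / (2*v)) * x^2) := by
      ext x
      rw [ENNReal.toReal_ofReal (gaussianPDFReal_nonneg _ _ _), key]
    rw [this]
    exact (integrable_exp_neg_mul_sq hb0).const_mul _
  · rw [integral_gaussianReal_eq_integral_smul hv]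
    simp_rw [key]
    rw [integral_const_mul, integral_gaussian, ← Real.sqrt_inv, ← Real.sqrt_mul (by positivity)]
    apply Real.sqrt_le_iff.2 ⟨by positivity, ?_⟩
    have := aux_exp (2*(l*v)) (by linarith)
    rw [← Real.exp_nat_mul]
    have e : ((2:ℕ):ℝ) * (l * v + 2 * (l*v)^2) = 2*(l*v) + (2*(l*v))^2 := by push_cast; ring
    rw [e]
    have e2 : (2 * Real.pi * v)⁻¹ * (Real.pi / ((1 - 2*(l*v)) / (2*v))) = 1 / (1 - 2*(l*v)) := by
      have : 1 - 2*(l*v) ≠ 0 := by linarith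
      have := Real.pi_pos
      field_simp
    rw [e2, div_le_iff₀ (by linarith)]
    linarith

lemma row_law (n : ℕ) (v : NNReal) (x : EuclideanSpace ℝ (Fin n)) :
    (Measure.pi fun _ : Fin n => gaussianReal 0 v).map (fun a => ∑ j, a j * x j) =
      gaussianReal 0 (v * ‖x‖₊^2) := by
  apply Measure.ext_of_charFun
  ext t
  have hi : iIndepFun (fun (j : Fin n) (a : Fin n → ℝ) => a j * x j)
      (Measure.pi fun _ : Fin n => gaussianReal 0 v) :=
    iIndepFun_pi (X := fun j a => a * x j) (fun i => by fun_prop)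
  rw [hi.charFun_map_fun_sum_eq_prod (fun i => Measurable.aemeasurable (by fun_prop))]
  have hm : ∀ j, (Measure.pi fun _ : Fin n => gaussianReal 0 v).map
      (fun a : Fin n → ℝ => a j * x j) = (gaussianReal 0 v).map (fun a => a * x j) := by
    intro j
    have h1 := (measurePreserving_eval (fun _ : Fin n => gaussianReal 0 v) j).map_eq
    have h2 := Measure.map_map (μ := Measure.pi fun _ : Fin n => gaussianReal 0 v)
      (g := fun a : ℝ => a * x j) (f := Function.eval j) (by fun_prop) (by fun_prop)
    rw [h1] at h2
    exact h2.symm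
  simp only [hm, Finset.prod_apply, gaussianReal_map_mul_const, charFun_gaussianReal]
  rw [← Complex.exp_sum]
  congr 1
  have h3 : ‖x‖^2 = ∑ i, x i^2 := by simp [EuclideanSpace.norm_sq_eq]
  simp only [mul_zero, Complex.ofReal_zero, zero_mul, zero_sub]
  push_cast
  rw [← Complex.ofReal_pow ‖x‖, h3]
  push_cast
  rw [Finset.sum_neg_distrib, Finset.mul_sum, Finset.sum_mul, Finset.sum_div]
  congr 1
  apply Finset.sum_congr rfl
  intros; push_cast; ring

lemma chernoff (m n : ℕ) (hm : 0 < m) (x : EuclideanSpace ℝ (Fin n)) (hx : x ≠ 0) (ε σ : ℝ)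
    (h0 : 0 < ε) (h1 : ε < 1) (hσ : σ = 1 ∨ σ = -1) :
    (gaussMatrix m n).real {A | ε * ‖x‖^2 ≤
      σ * (‖Matrix.toEuclideanLin (Matrix.of A) x‖^2 - ‖x‖^2)} ≤ Real.exp (-(m * ε^2/8)) := by
  have hs : σ^2 = 1 := by rcases hσ with h | h <;> simp [h]
  have hx0 : 0 < ‖x‖ := norm_pos_iff.2 hx
  have hm0 : (0:ℝ) < m := by exact_mod_cast hm
  set v : NNReal := (m:NNReal)⁻¹ * ‖x‖₊^2 with hv
  have hvR : (v:ℝ) = ‖x‖^2 / m := by simp [hv]; ring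
  have hv0 : v ≠ 0 := by
    rw [← NNReal.coe_ne_zero, hvR]; positivity
  set l : ℝ := σ * ε / 4 * m / ‖x‖^2 with hl
  have hlv : l * v = σ * ε / 4 := by rw [hvR, hl]; field_simp
  obtain ⟨hI, hB⟩ := gauss_sq v hv0 l (by
    rw [hlv]; rcases hσ with h | h <;> rw [h, abs_le] <;> constructor <;> linarith)
  set P : Measure (Fin n → ℝ) := Measure.pi fun _ : Fin n => gaussianReal 0 (m:NNReal)⁻¹ with hP
  have hlaw : P.map (fun a => ∑ j, a j * x j) = gaussianReal 0 v := row_law n _ x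
  have hmeas : Measurable (fun a : Fin n → ℝ => ∑ j, a j * x j) := by fun_prop
  rw [← hlaw] at hI hB
  rw [integral_map hmeas.aemeasurable (by fun_prop)] at hB
  rw [integrable_map_measure (by fun_prop) hmeas.aemeasurable] at hI
  have hprod : ∀ A : Fin m → Fin n → ℝ, Real.exp (l * ‖Matrix.toEuclideanLin (Matrix.of A) x‖^2) =
      ∏ i, Real.exp (l * (∑ j, A i j * x j)^2) := by
    intro A
    rw [← Real.exp_sum, ← Finset.mul_sum, EuclideanSpace.norm_sq_eq]
    simp [Matrix.mulVec, dotProduct]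
  have : IsProbabilityMeasure (gaussMatrix m n) := by unfold gaussMatrix; infer_instance
  have hch := measure_ge_le_exp_mul_mgf (μ := gaussMatrix m n)
    (X := fun A => l * ‖Matrix.toEuclideanLin (Matrix.of A) x‖^2) (t := 1)
    (m * (σ * ε / 4 + ε^2/4)) zero_le_one (by
      simp only [one_mul, hprod]
      exact Integrable.fintype_prod (fun i => hI))
  have hmgf : mgf (fun A => l * ‖Matrix.toEuclideanLin (Matrix.of A) x‖^2) (gaussMatrix m n) 1 ≤
      Real.exp (l * v + 2 * (l*v)^2) ^ m := by
    rw [mgf]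
    simp only [one_mul, hprod]
    rw [gaussMatrix, integral_fintype_prod_eq_prod (f := fun _ (a : Fin n → ℝ) => Real.exp (l * (∑ j, a j * x j)^2))]
    rw [Finset.prod_const, Finset.card_univ, Fintype.card_fin]
    gcongr
  refine (measureReal_mono ?_).trans (hch.trans ((mul_le_mul_of_nonneg_left hmgf (Real.exp_pos _).le).trans ?_))
  · intro A hA
    simp only [Set.mem_ofPred_eq] at hA ⊢
    set q := ‖Matrix.toEuclideanLin (Matrix.of A) x‖^2
    have h5 : l * q = (σ * ε/4 * m) + (ε/4*m/‖x‖^2) * (σ * (q - ‖x‖^2)) := by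
      rw [hl]; field_simp; ring
    rw [h5]
    have h6 := mul_le_mul_of_nonneg_left hA (show 0 ≤ (ε/4*m/‖x‖^2) by positivity)
    have h7 : (ε/4*m/‖x‖^2) * (ε * ‖x‖^2) = m * (ε^2/4) := by field_simp
    linarith
  · rw [← Real.exp_nat_mul, ← Real.exp_add, hlv]
    apply Real.exp_le_exp.2
    have : (σ*ε/4)^2 = ε^2/16 := by rw [div_pow, mul_pow, hs]; ring
    rw [this]
    apply le_of_eq; ring

lemma tail (m n : ℕ) (hm : 0 < m) (x : EuclideanSpace ℝ (Fin n)) (ε : ℝ)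
    (h0 : 0 < ε) (h1 : ε < 1) :
    (gaussMatrix m n) {A | ε * ‖x‖^2 <
      |‖Matrix.toEuclideanLin (Matrix.of A) x‖^2 - ‖x‖^2|} ≤
      ENNReal.ofReal (2 * Real.exp (-(m * ε^2/8))) := by
  have : IsProbabilityMeasure (gaussMatrix m n) := by unfold gaussMatrix; infer_instance
  by_cases hx : x = 0
  · simp [hx]
  rw [← ofReal_measureReal]
  apply ENNReal.ofReal_le_ofReal
  refine (measureReal_mono ?_).trans ((measureReal_union_le _ _).trans (
    (add_le_add (chernoff m n hm x hx ε 1 h0 h1 (Or.inl rfl)) (chernoff m n hm x hx ε (-1) h0 h1 (Or.inr rfl))).trans (by linarith)))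
  intro A hA
  simp only [Set.mem_ofPred_eq, Set.mem_union] at hA ⊢
  rcases lt_abs.1 hA with h | h
  · left; linarith
  · right; linarith

lemma half_net (E : Type*) [NormedAddCommGroup E] [NormedSpace ℝ E] [FiniteDimensional ℝ E] :
    ∃ T : Finset E, T.card ≤ 5 ^ Module.finrank ℝ E ∧ ∀ x : E, ‖x‖ ≤ 1 → ∃ u ∈ T, ‖x - u‖ ≤ 1/2 := by
  classical
  let p : ℕ → Prop := fun k => ∃ s : Finset E, s.card = k ∧ (∀ c ∈ s, ‖c‖ ≤ 2) ∧
    (∀ c ∈ s, ∀ d ∈ s, c ≠ d → 1 ≤ ‖c - d‖)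
  have hp0 : p 0 := ⟨∅, by simp⟩
  have hbd : ∀ k, p k → k ≤ 5 ^ Module.finrank ℝ E := by
    rintro k ⟨s, rfl, h1, h2⟩
    exact Besicovitch.card_le_of_separated s h1 h2
  obtain ⟨s, hs, h1, h2⟩ := Nat.findGreatest_spec (P := p) (Nat.zero_le (5 ^ Module.finrank ℝ E)) hp0
  have hmax : ∀ k, p k → k ≤ s.card := fun k hk => hs ▸ Nat.le_findGreatest (hbd k hk) hk
  refine ⟨s.image (fun c => (1/2:ℝ) • c), Finset.card_image_le.trans (Besicovitch.card_le_of_separated s h1 h2), ?_⟩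
  intro x hx
  by_contra! hcon
  have hfar : ∀ c ∈ s, 1 ≤ ‖(2:ℝ) • x - c‖ := by
    intro c hc
    have := hcon _ (Finset.mem_image_of_mem _ hc)
    have e : (2:ℝ) • x - c = (2:ℝ) • (x - (1/2:ℝ) • c) := by rw [smul_sub, smul_smul]; norm_num
    rw [e, norm_smul]; norm_num at this ⊢; linarith
  have hns : (2:ℝ) • x ∉ s := by
    intro h; have := hfar _ h; simp at this; linarith
  have := hmax (s.card + 1) ⟨insert ((2:ℝ) • x) s, Finset.card_insert_of_notMem hns, by
    intro c hc
    rcases Finset.mem_insert.1 hc with rfl | hc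
    · rw [norm_smul]; norm_num; linarith
    · exact h1 c hc, by
    intro c hc d hd hcd
    rcases Finset.mem_insert.1 hc with rfl | hc <;> rcases Finset.mem_insert.1 hd with rfl | hd
    · exact absurd rfl hcd
    · exact hfar _ hd
    · rw [norm_sub_rev]; exact hfar _ hc
    · exact h2 _ hc _ hd hcd⟩
  omega

lemma quarter_net (E : Type*) [NormedAddCommGroup E] [NormedSpace ℝ E] [FiniteDimensional ℝ E] :
    ∃ T : Finset E, T.card ≤ 25 ^ Module.finrank ℝ E ∧ ∀ x : E, ‖x‖ ≤ 1 → ∃ u ∈ T, ‖x - u‖ ≤ 1/4 := by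
  classical
  obtain ⟨T, hT, h⟩ := half_net E
  refine ⟨(T ×ˢ T).image (fun p => p.1 + (1/2:ℝ) • p.2), ?_, ?_⟩
  · refine Finset.card_image_le.trans ?_
    rw [Finset.card_product, show 25 = 5*5 from rfl, mul_pow]
    exact Nat.mul_le_mul hT hT
  · intro x hx
    obtain ⟨u, hu, hxu⟩ := h x hx
    obtain ⟨w, hw, hxw⟩ := h ((2:ℝ) • (x - u)) (by rw [norm_smul]; norm_num; linarith)
    refine ⟨_, Finset.mem_image_of_mem _ (Finset.mk_mem_product hu hw), ?_⟩
    have e : x - (u + (1/2:ℝ) • w) = (1/2:ℝ) • ((2:ℝ) • (x - u) - w) := by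
      rw [smul_sub, smul_smul]; norm_num; abel
    simp only
    rw [e, norm_smul]; norm_num; linarith

lemma net_bound {E F : Type*} [NormedAddCommGroup E] [InnerProductSpace ℝ E] [FiniteDimensional ℝ E]
    [NormedAddCommGroup F] [InnerProductSpace ℝ F] (L : E →ₗ[ℝ] F) (T : Finset E)
    (hT : ∀ x : E, ‖x‖ ≤ 1 → ∃ u ∈ T, ‖x - u‖ ≤ 1/4) (α : ℝ) (hα : 0 < α)
    (hL : ∀ u ∈ T, |‖L u‖^2 - ‖u‖^2| ≤ α/4 * ‖u‖^2) (x : E) :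
    |‖L x‖^2 - ‖x‖^2| ≤ α * ‖x‖^2 := by
  have hcont : Continuous L := L.continuous_of_finiteDimensional
  set Q : E → ℝ := fun x => ‖L x‖^2 - ‖x‖^2 with hQ
  have hQs : ∀ (r : ℝ) y, Q (r • y) = r^2 * Q y := by
    intro r y; simp only [hQ, map_smul, norm_smul, mul_pow, Real.norm_eq_abs, sq_abs]; ring
  obtain ⟨x0, hx0, hmax⟩ := (isCompact_closedBall (0:E) 1).exists_isMaxOn ⟨0, by simp⟩
    (f := fun x => |Q x|) (by fun_prop)
  set M := |Q x0| with hM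
  have hM0 : 0 ≤ M := abs_nonneg _
  have hball : ∀ y, |Q y| ≤ M * ‖y‖^2 := by
    intro y
    by_cases hy : y = 0
    · simp [hy, hQ]
    have hy0 : 0 < ‖y‖ := norm_pos_iff.2 hy
    have := hmax (show ‖y‖⁻¹ • y ∈ Metric.closedBall (0:E) 1 by
      simp [norm_smul, hy0.ne'])
    simp only [Set.mem_ofPred_eq] at this
    rw [hQs, abs_mul, abs_of_nonneg (by positivity), inv_pow, inv_mul_le_iff₀ (by positivity)] at this
    linarith
  have hx1 : ‖x0‖ ≤ 1 := by simpa using hx0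
  obtain ⟨u, hu, hxu⟩ := hT x0 hx1
  have hLu := hL u hu
  have hun : ‖u‖ ≤ 5/4 := by
    have : ‖u‖ ≤ ‖x0‖ + ‖x0 - u‖ := by
      have := norm_sub_le x0 (x0 - u); simpa using this
    linarith
  have hpol : ∀ a b : E, |Q (a+b) - Q (a-b)| ≤ 2 * M * (‖a‖^2 + ‖b‖^2) := by
    intro a b
    have h1 := hball (a+b)
    have h2 := hball (a-b)
    have h3' := parallelogram_law_with_norm ℝ a b
    have := abs_sub (Q (a+b)) (Q (a-b))
    calc _ ≤ _ := this
      _ ≤ M * ‖a+b‖^2 + M * ‖a-b‖^2 := add_le_add h1 h2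
      _ = M * (‖a+b‖^2 + ‖a-b‖^2) := by ring
      _ = _ := by rw [h3']; ring
  have hdiff : |Q x0 - Q u| ≤ 3/5 * M := by
    have h1 := hpol (x0 - u) ((1/8:ℝ) • (x0+u))
    have hq : Q ((x0 - u) + (1/8:ℝ) • (x0+u)) - Q ((x0 - u) - (1/8:ℝ) • (x0+u)) =
        4 * (1/8) * (Q x0 - Q u) := by
      simp only [hQ, map_add, map_sub, map_smul, ← real_inner_self_eq_norm_sq]
      simp only [inner_add_left, inner_add_right, inner_sub_left, inner_sub_right,
        inner_smul_left, inner_smul_right, real_inner_comm (L x0) (L u), real_inner_comm x0 u]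
      simp
      ring
    rw [hq, abs_mul] at h1
    have h2 : ‖(1/8:ℝ) • (x0+u)‖ ≤ 9/32 := by
      rw [norm_smul]; have := norm_add_le x0 u; norm_num; linarith
    have h3 : ‖x0 - u‖^2 ≤ (1/4)^2 := by gcongr
    have h4 : ‖(1/8:ℝ) • (x0+u)‖^2 ≤ (9/32)^2 := by gcongr
    have h5 : 2 * M * (‖x0 - u‖^2 + ‖(1/8:ℝ) • (x0+u)‖^2) ≤ 2 * M * ((1/4)^2 + (9/32)^2) := by
      gcongr
    norm_num at h1 h5
    nlinarith
  have hu2 : ‖u‖^2 ≤ (5/4)^2 := by gcongr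
  have hMle : M ≤ α := by
    have h1 : M ≤ |Q u| + |Q x0 - Q u| := by
      have := abs_add_le (Q u) (Q x0 - Q u); simpa [hM] using this
    have h2 : |Q u| ≤ α/4 * (5/4)^2 := hLu.trans (by gcongr)
    nlinarith
  exact (hball x).trans (by gcongr)

lemma subspace_bound (m n : ℕ) (hm : 0 < m) (W : Submodule ℝ (EuclideanSpace ℝ (Fin n))) (r : ℕ)
    (hW : Module.finrank ℝ W ≤ r) (α : ℝ) (h0 : 0 < α) (h1 : α < 1) :
    gaussMatrix m n {A | ∃ x ∈ W, ‖Matrix.toEuclideanLin (Matrix.of A) x‖ < (1 - α) * ‖x‖} ≤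
      ENNReal.ofReal (25 ^ r * (2 * Real.exp (-(m * (α/4)^2/8)))) := by
  obtain ⟨T, hTc, hT⟩ := quarter_net W
  calc _ ≤ gaussMatrix m n (⋃ u ∈ T, {A | α/4 * ‖(u : EuclideanSpace ℝ (Fin n))‖^2 <
      |‖Matrix.toEuclideanLin (Matrix.of A) u‖^2 - ‖(u : EuclideanSpace ℝ (Fin n))‖^2|}) := by
        apply measure_mono
        rintro A ⟨x, hx, hlt⟩
        by_contra hcon
        simp only [Set.mem_iUnion, Set.mem_ofPred_eq, not_exists, not_lt] at hcon
        have := net_bound ((Matrix.toEuclideanLin (Matrix.of A)).comp W.subtype) T hT α h0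
          (fun u hu => hcon u hu) ⟨x, hx⟩
        simp only [LinearMap.comp_apply, Submodule.subtype_apply, Submodule.coe_norm] at this
        have h2 := (abs_le.1 this).1
        have h3 : ‖Matrix.toEuclideanLin (Matrix.of A) x‖^2 < ((1-α) * ‖x‖)^2 := by gcongr
        nlinarith [mul_nonneg (mul_nonneg h0.le (sub_nonneg.2 h1.le)) (sq_nonneg ‖x‖)]
    _ ≤ ∑ u ∈ T, ENNReal.ofReal (2 * Real.exp (-(m * (α/4)^2/8))) :=
        (measure_biUnion_finset_le T _).trans (Finset.sum_le_sum fun (u : W) _ =>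
          tail m n hm (u : EuclideanSpace ℝ (Fin n)) (α/4) (by linarith) (by linarith))
    _ = ENNReal.ofReal (T.card * (2 * Real.exp (-(m * (α/4)^2/8)))) := by
        rw [Finset.sum_const, nsmul_eq_mul, ENNReal.ofReal_mul (p := (T.card : ℝ)) (by positivity), ENNReal.ofReal_natCast]
    _ ≤ _ := by
        apply ENNReal.ofReal_le_ofReal
        gcongr
        have := hTc.trans (Nat.pow_le_pow_right (by norm_num) hW)
        exact_mod_cast this

/-- Lemma 4: for a union of at most `(kht/s)^{sd}` subspaces of dimension at most `s`,
a Gaussian matrix with `m ≳ (1/α²) s d log(kht/s)` rows satisfies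
S-REC(⋃ᵢ Vᵢ, 1-α, 0) with probability at least `1 - exp(-c α² m)`. -/
theorem gaussian_srec_generator_range :
    ∃ C c : ℝ, 0 < C ∧ 0 < c ∧
      ∀ (k h t d s : ℕ), 0 < k → 0 < h → 0 < t → 0 < d → 1 ≤ s → s ≤ k →
        3 * s ≤ k * h * t →
        ∀ (n N m : ℕ) (V : Fin N → Submodule ℝ (EuclideanSpace ℝ (Fin n))),
          (∀ i, Module.finrank ℝ (V i) ≤ s) →
          (N : ℝ) ≤ ((k * h * t : ℝ) / s) ^ (s * d) →
          ∀ α : ℝ, α ∈ Set.Ioo (0 : ℝ) 1 →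
            (m : ℝ) ≥ C * (1 / α ^ 2) * s * d * Real.log ((k * h * t : ℝ) / s) →
            ENNReal.ofReal (1 - Real.exp (-c * α ^ 2 * m)) ≤
              gaussMatrix m n {A |
                ∀ x₁ ∈ ⋃ i, (V i : Set (EuclideanSpace ℝ (Fin n))),
                  ∀ x₂ ∈ ⋃ i, (V i : Set (EuclideanSpace ℝ (Fin n))),
                    (1 - α) * ‖x₁ - x₂‖ ≤
                      ‖Matrix.toEuclideanLin (Matrix.of A) (x₁ - x₂)‖} := by
  refine ⟨2816, 1/256, by norm_num, by norm_num, ?_⟩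
  intro k h t d s hk hh ht hd hs hsk hkht n N m V hV hN α ⟨h0, h1⟩ hm
  set R : ℝ := (k * h * t : ℝ) / s with hR
  have hs0 : (0:ℝ) < s := by exact_mod_cast hs
  have hs1 : (1:ℝ) ≤ s := by exact_mod_cast hs
  have hd1 : (1:ℝ) ≤ d := by exact_mod_cast hd
  have hR3 : 3 ≤ R := by
    rw [hR, le_div_iff₀ hs0]; exact_mod_cast hkht
  have hl1 : 1 ≤ Real.log R := by
    rw [Real.le_log_iff_exp_le (by linarith)]
    have := Real.exp_one_lt_d9
    linarith
  set B : ℝ := s * d * Real.log R with hB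
  have hsd : (s:ℝ) ≤ B := by
    have : (1:ℝ) ≤ d * Real.log R := one_le_mul_of_one_le_of_one_le hd1 hl1
    rw [hB, mul_assoc]; exact le_mul_of_one_le_right hs0.le this
  have hmB : 2816 * B ≤ α^2 * m := by
    have : (2816 * (1 / α^2) * s * d * Real.log R) * α^2 ≤ m * α^2 :=
      mul_le_mul_of_nonneg_right hm (by positivity)
    have e : (2816 * (1 / α^2) * s * d * Real.log R) * α^2 = 2816 * B := by
      rw [hB]; field_simp
    linarith
  have hm0 : 0 < m := by
    rcases Nat.eq_zero_or_pos m with h | h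
    · rw [h] at hmB; simp at hmB; linarith
    · exact h
  have : IsProbabilityMeasure (gaussMatrix m n) := by unfold gaussMatrix; infer_instance
  set G : Set (Fin m → Fin n → ℝ) := {A |
                ∀ x₁ ∈ ⋃ i, (V i : Set (EuclideanSpace ℝ (Fin n))),
                  ∀ x₂ ∈ ⋃ i, (V i : Set (EuclideanSpace ℝ (Fin n))),
                    (1 - α) * ‖x₁ - x₂‖ ≤
                      ‖Matrix.toEuclideanLin (Matrix.of A) (x₁ - x₂)‖} with hG
  have hbad : gaussMatrix m n Gᶜ ≤ ENNReal.ofReal (Real.exp (-(1/256) * α^2 * m)) := by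
    calc _ ≤ gaussMatrix m n (⋃ p ∈ (Finset.univ : Finset (Fin N × Fin N)),
          {A | ∃ x ∈ V p.1 ⊔ V p.2, ‖Matrix.toEuclideanLin (Matrix.of A) x‖ < (1 - α) * ‖x‖}) := by
          apply measure_mono
          intro A hA
          rw [hG, Set.mem_compl_iff, Set.mem_ofPred_eq] at hA
          push Not at hA
          obtain ⟨x, hx, y, hy, hlt⟩ := hA
          obtain ⟨i, hi⟩ := Set.mem_iUnion.1 hx
          obtain ⟨j, hj⟩ := Set.mem_iUnion.1 hy
          refine Set.mem_biUnion (Finset.mem_coe.2 (Finset.mem_univ (i, j))) ⟨x - y, ?_, hlt⟩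
          exact Submodule.sub_mem _ (Submodule.mem_sup_left hi) (Submodule.mem_sup_right hj)
      _ ≤ ∑ p : Fin N × Fin N, ENNReal.ofReal (25 ^ (2*s) * (2 * Real.exp (-(m * (α/4)^2/8)))) := by
          refine (measure_biUnion_finset_le _ _).trans (Finset.sum_le_sum fun p _ => ?_)
          refine subspace_bound m n hm0 _ _ ?_ α h0 h1
          have := Submodule.finrank_add_le_finrank_add_finrank (V p.1) (V p.2)
          have := hV p.1
          have := hV p.2
          omega
      _ = ENNReal.ofReal ((N:ℝ)^2 * (25 ^ (2*s) * (2 * Real.exp (-(m * (α/4)^2/8))))) := by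
          rw [Finset.sum_const, nsmul_eq_mul, ENNReal.ofReal_mul (p := (N:ℝ)^2) (by positivity), Finset.card_univ,
            ← Nat.cast_pow, ENNReal.ofReal_natCast, Fintype.card_prod, Fintype.card_fin, sq N]
      _ ≤ _ := by
          apply ENNReal.ofReal_le_ofReal
          have hN1 : (N:ℝ) ≤ Real.exp B := by
            refine hN.trans (le_of_eq ?_)
            rw [hB, ← Nat.cast_mul, Real.exp_nat_mul, Real.exp_log (by linarith)]
          have hN2 : (N:ℝ)^2 ≤ Real.exp (2 * B) := by
            rw [two_mul, Real.exp_add, ← sq]; gcongr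
          have h25 : (25:ℝ)^(2*s) ≤ Real.exp (8 * B) := by
            have he : (25:ℝ) ≤ Real.exp 4 := by
              have h27 := Real.exp_one_gt_d9
              have : Real.exp 4 = (Real.exp 1)^4 := by rw [← Real.exp_nat_mul]; norm_num
              rw [this]
              calc (25:ℝ) ≤ 2.7^4 := by norm_num
                _ ≤ _ := by gcongr; linarith
            calc (25:ℝ)^(2*s) ≤ (Real.exp 4)^(2*s) := by gcongr
              _ = Real.exp (8 * s) := by rw [← Real.exp_nat_mul]; push_cast; congr 1; ring
              _ ≤ _ := by gcongr
          have h2 : (2:ℝ) ≤ Real.exp B := by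
            have := Real.add_one_le_exp B
            linarith
          calc _ ≤ Real.exp (2*B) * (Real.exp (8*B) * (Real.exp B * Real.exp (-(m * (α/4)^2/8)))) := by
                gcongr
            _ = Real.exp (2*B + (8*B + (B + -(m * (α/4)^2/8)))) := by simp only [Real.exp_add]
            _ ≤ _ := by
                apply Real.exp_le_exp.2
                nlinarith
  have h1' : 1 ≤ gaussMatrix m n G + gaussMatrix m n Gᶜ := by
    have := measure_union_le (μ := gaussMatrix m n) G Gᶜ
    rwa [Set.union_compl_self, measure_univ] at this
  rw [ENNReal.ofReal_sub _ (Real.exp_pos _).le, ENNReal.ofReal_one]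
  exact tsub_le_iff_right.2 (h1'.trans (by gcongr))
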